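/- Fix an integer w. Let S = { t ↦ w + 2 − 2t, t ↦ w − 4 + 4t, t ↦ w − 2 + 2t, t ↦ w − 2, t ↦ w − 2 − 2t, t ↦ w + 2t, t ↦ w, t ↦ w − 2t }. Then there are exactly ten continuous functions f : [0,1] → ℝ that are piecewise along S, satisfy f(1) = w, and satisfy w + 4(t − 1) ≤ f(t) ≤ w − 2(t − 1) for all t ∈ [0,1]: the four affine functions w + 2 − 2t, w − 4 + 4t, w − 2 + 2t, and the constant w; and six functions with non-constant slope, namely (w − 2 − 2t on [0,1/3], then w − 4 + 4t), (w − 2 on [0,1/2], then w − 4 + 4t), (w − 2t on [0,2/3], then w − 4 + 4t), (w − 2t on [0,1/2], then w − 2 + 2t), (w + 2t on [0,1/2], then w + 2 − 2t), and (w − 2 + 2t on [0,1/2], then w − 2t on [1/2,2/3], then w − 4 + 4t). (This is the enumeration of the ten possible paths for the annular Rasmussen invariant d_t of a 4-braid closure with writhe w, before the subcomplex restriction is applied.) -/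

import Mathlib

/-- A function `f` on `[0,1]` is *piecewise along* a set `S` of functions `ℝ → ℝ`
if there are finitely many points `0 = t₀ < t₁ < ⋯ < t_k = 1` such that on each
subinterval `[t_{i-1}, t_i]` the function `f` coincides with some element of `S`. -/
def PiecewiseAlong (S : Set (ℝ → ℝ)) (f : Set.Icc (0 : ℝ) 1 → ℝ) : Prop :=
  ∃ (k : ℕ) (t : ℕ → ℝ), t 0 = 0 ∧ t k = 1 ∧ (∀ i, i < k → t i < t (i + 1)) ∧
    ∀ i, i < k → ∃ g ∈ S, ∀ x : Set.Icc (0 : ℝ) 1,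
      t i ≤ (x : ℝ) → (x : ℝ) ≤ t (i + 1) → f x = g (x : ℝ)

/-- The affine function `t ↦ w + 2 - 2t`. -/
noncomputable def path₁ (w : ℤ) : C(Set.Icc (0 : ℝ) 1, ℝ) :=
  ⟨fun x => (w : ℝ) + 2 - 2 * (x : ℝ), by fun_prop⟩

/-- The affine function `t ↦ w - 4 + 4t`. -/
noncomputable def path₂ (w : ℤ) : C(Set.Icc (0 : ℝ) 1, ℝ) :=
  ⟨fun x => (w : ℝ) - 4 + 4 * (x : ℝ), by fun_prop⟩

/-- The affine function `t ↦ w - 2 + 2t`. -/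
noncomputable def path₃ (w : ℤ) : C(Set.Icc (0 : ℝ) 1, ℝ) :=
  ⟨fun x => (w : ℝ) - 2 + 2 * (x : ℝ), by fun_prop⟩

/-- The constant function `t ↦ w`. -/
noncomputable def path₄ (w : ℤ) : C(Set.Icc (0 : ℝ) 1, ℝ) :=
  ⟨fun _ => (w : ℝ), continuous_const⟩

/-- The function equal to `w - 2 - 2t` on `[0,1/3]` and to `w - 4 + 4t` on `[1/3,1]`. -/
noncomputable def path₅ (w : ℤ) : C(Set.Icc (0 : ℝ) 1, ℝ) :=
  ⟨fun x => max ((w : ℝ) - 2 - 2 * (x : ℝ)) ((w : ℝ) - 4 + 4 * (x : ℝ)), by fun_prop⟩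

/-- The function equal to `w - 2` on `[0,1/2]` and to `w - 4 + 4t` on `[1/2,1]`. -/
noncomputable def path₆ (w : ℤ) : C(Set.Icc (0 : ℝ) 1, ℝ) :=
  ⟨fun x => max ((w : ℝ) - 2) ((w : ℝ) - 4 + 4 * (x : ℝ)), by fun_prop⟩

/-- The function equal to `w - 2t` on `[0,2/3]` and to `w - 4 + 4t` on `[2/3,1]`. -/
noncomputable def path₇ (w : ℤ) : C(Set.Icc (0 : ℝ) 1, ℝ) :=
  ⟨fun x => max ((w : ℝ) - 2 * (x : ℝ)) ((w : ℝ) - 4 + 4 * (x : ℝ)), by fun_prop⟩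

/-- The function equal to `w - 2t` on `[0,1/2]` and to `w - 2 + 2t` on `[1/2,1]`. -/
noncomputable def path₈ (w : ℤ) : C(Set.Icc (0 : ℝ) 1, ℝ) :=
  ⟨fun x => max ((w : ℝ) - 2 * (x : ℝ)) ((w : ℝ) - 2 + 2 * (x : ℝ)), by fun_prop⟩

/-- The function equal to `w + 2t` on `[0,1/2]` and to `w + 2 - 2t` on `[1/2,1]`. -/
noncomputable def path₉ (w : ℤ) : C(Set.Icc (0 : ℝ) 1, ℝ) :=
  ⟨fun x => min ((w : ℝ) + 2 * (x : ℝ)) ((w : ℝ) + 2 - 2 * (x : ℝ)), by fun_prop⟩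

/-- The function equal to `w - 2 + 2t` on `[0,1/2]`, to `w - 2t` on `[1/2,2/3]` and to
`w - 4 + 4t` on `[2/3,1]`. -/
noncomputable def path₁₀ (w : ℤ) : C(Set.Icc (0 : ℝ) 1, ℝ) :=
  ⟨fun x => max (min ((w : ℝ) - 2 + 2 * (x : ℝ)) ((w : ℝ) - 2 * (x : ℝ)))
      ((w : ℝ) - 4 + 4 * (x : ℝ)), by fun_prop⟩

/-!
Two of the eight lines cross over the open unit interval only at `1/3`, `1/2` or `2/3`: on each of
the four pieces between these points the difference of two lines has the same sign at both ends.
Hence a continuous selection of the lines stays on a single line along each piece, and it is encoded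
by its itinerary, the sequence of four lines it runs through. Consecutive lines must meet at the
point between their pieces and the last one must end at height `w`; finitely many integer checks
leave ten itineraries. As all slopes lie between `-2` and `4`, a path ending at `w` stays in the
triangular region.
-/

open Set Function

lemma exists_eq_of_forall_exists_eq {X Y ι : Type*} [TopologicalSpace X] [PreconnectedSpace X]
    [Nonempty X] [TopologicalSpace Y] [T2Space Y] [Finite ι] {f : X → Y} {ℓ : ι → X → Y}
    (hf : Continuous f) (hℓ : ∀ i, Continuous (ℓ i)) (hsel : ∀ x, ∃ i, f x = ℓ i x)
    (hinj : ∀ x, Injective fun i => ℓ i x) : ∃ i, f = ℓ i := by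
  obtain ⟨x₀⟩ := ‹Nonempty X›
  obtain ⟨i, hi⟩ := hsel x₀
  have hclosed (j : ι) : IsClosed {x | f x = ℓ j x} := isClosed_eq hf (hℓ j)
  have hcompl : {x | f x = ℓ i x}ᶜ = ⋃ j : {j // j ≠ i}, {x | f x = ℓ j x} := by
    ext x
    simp only [mem_compl_iff, mem_ofPred_eq, mem_iUnion, Subtype.exists, exists_prop]
    refine ⟨fun hx => ?_, fun ⟨j, hji, hj⟩ hx => hji (hinj x (hj.symm.trans hx))⟩
    obtain ⟨j, hj⟩ := hsel x
    exact ⟨j, fun hji => hx (hji ▸ hj), hj⟩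
  have hopen : IsOpen {x | f x = ℓ i x} := by
    rw [← isClosed_compl_iff, hcompl]
    exact isClosed_iUnion_of_finite fun j => hclosed j
  exact ⟨i, funext (eq_univ_iff_forall.1 (IsClopen.eq_univ ⟨hclosed i, hopen⟩ ⟨x₀, hi⟩))⟩

lemma exists_eqOn_Icc_of_injective_on_Ioo {α Y ι : Type*}
    [ConditionallyCompleteLinearOrder α] [TopologicalSpace α] [OrderTopology α] [DenselyOrdered α]
    [TopologicalSpace Y] [T2Space Y] [Finite ι] {a b : α} (hab : a < b) {F : α → Y}
    {ℓ : ι → α → Y} (hF : ContinuousOn F (Icc a b))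
    (hℓ : ∀ i, ContinuousOn (ℓ i) (Icc a b)) (hsel : ∀ x ∈ Ioo a b, ∃ i, F x = ℓ i x)
    (hinj : ∀ x ∈ Ioo a b, Injective fun i => ℓ i x) : ∃ i, EqOn F (ℓ i) (Icc a b) := by
  have : PreconnectedSpace (Ioo a b) := Subtype.preconnectedSpace isPreconnected_Ioo
  have : Nonempty (Ioo a b) := (nonempty_Ioo.2 hab).to_subtype
  obtain ⟨i, hi⟩ := exists_eq_of_forall_exists_eq (f := (Ioo a b).domRestrict F)
    (ℓ := fun i => (Ioo a b).domRestrict (ℓ i)) (hF.mono Ioo_subset_Icc_self).domRestrict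
    (fun i => ((hℓ i).mono Ioo_subset_Icc_self).domRestrict) (fun x => hsel x x.2)
    (fun x => hinj x x.2)
  exact ⟨i, (domRestrict_eq_domRestrict_iff.1 hi).of_subset_closure hF (hℓ i) Ioo_subset_Icc_self
    (closure_Ioo hab.ne).ge⟩

lemma eq_zero_and_eq_zero_of_mul_add_mul_eq_zero {R : Type*} [CommRing R] [LinearOrder R]
    [IsStrictOrderedRing R] {a b d e : R} (ha : 0 < a) (hb : 0 < b) (hde : 0 ≤ d * e)
    (h : a * d + b * e = 0) : d = 0 ∧ e = 0 := by
  have hd : d = 0 := by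
    have hsq : a * (d * d) = -(b * (d * e)) := by linear_combination d * h
    have : d * d ≤ 0 := by
      refine nonpos_of_mul_nonpos_right (hsq.trans_le ?_) ha
      exact neg_nonpos.2 (mul_nonneg hb.le hde)
    nlinarith
  subst hd
  simpa [hb.ne'] using h

/-- `t 0 < t 1 < ⋯ < t n` is a subdivision of the unit interval into `n` pieces; the values of `t`
beyond `n` are irrelevant. -/
structure IsSubdivision (n : ℕ) (t : ℕ → ℝ) : Prop where
  zero : t 0 = 0
  last : t n = 1
  lt_succ : ∀ k < n, t k < t (k + 1)

namespace IsSubdivision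

variable {n : ℕ} {t : ℕ → ℝ}

lemma mem_Icc (ht : IsSubdivision n t) {k : ℕ} (hk : k ≤ n) : t k ∈ Icc (0 : ℝ) 1 := by
  have hmono : MonotoneOn t (Iic n) := (strictMonoOn_Iic_of_lt_succ ht.lt_succ).monotoneOn
  exact ⟨ht.zero.ge.trans (hmono (mem_Iic.2 n.zero_le) hk k.zero_le),
    (hmono hk (mem_Iic.2 le_rfl) hk).trans ht.last.le⟩

lemma exists_mem_Icc_succ (ht : IsSubdivision n t) {x : ℝ} (hx : x ∈ Icc (0 : ℝ) 1) :
    ∃ k < n, x ∈ Icc (t k) (t (k + 1)) := by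
  by_contra! hout
  have hle : ∀ k ≤ n, t k ≤ x := by
    intro k hk
    induction k with
    | zero => exact ht.zero.trans_le hx.1
    | succ k ih => exact (not_le.1 fun h => hout k hk ⟨ih (by lia), h⟩).le
  obtain ⟨m, rfl⟩ : ∃ m, n = m + 1 :=
    Nat.exists_eq_succ_of_ne_zero (by rintro rfl; linarith [ht.zero, ht.last])
  exact hout m m.lt_succ_self ⟨hle m m.le_succ, hx.2.trans ht.last.ge⟩

end IsSubdivision

namespace PiecewiseAlong

variable {S : Set (ℝ → ℝ)} {f : Icc (0 : ℝ) 1 → ℝ}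

lemma exists_mem_eq (hf : PiecewiseAlong S f) (x : Icc (0 : ℝ) 1) : ∃ g ∈ S, f x = g x := by
  obtain ⟨n, t, h0, h1, hlt, hpiece⟩ := hf
  obtain ⟨k, hk, hx⟩ := IsSubdivision.exists_mem_Icc_succ ⟨h0, h1, hlt⟩ x.2
  obtain ⟨g, hg, hfg⟩ := hpiece k hk
  exact ⟨g, hg, hfg x hx.1 hx.2⟩

lemma map (hf : PiecewiseAlong S f) (φ : ℝ → ℝ → ℝ) :
    PiecewiseAlong ((fun g x => φ x (g x)) '' S) fun x => φ x (f x) := by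
  obtain ⟨n, t, h0, h1, hlt, hpiece⟩ := hf
  refine ⟨n, t, h0, h1, hlt, fun k hk => ?_⟩
  obtain ⟨g, hg, hfg⟩ := hpiece k hk
  exact ⟨_, mem_image_of_mem _ hg, fun x hl hr => congrArg (φ x) (hfg x hl hr)⟩

lemma monotone (hf : PiecewiseAlong S f) (hS : ∀ g ∈ S, Monotone g) : Monotone f := by
  obtain ⟨n, t, h0, h1, -, hpiece⟩ := hf
  have hpiece_le : ∀ k < n, ∀ x y : Icc (0 : ℝ) 1, t k ≤ x → x ≤ y → y ≤ t (k + 1) → f x ≤ f y := by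
    intro k hk x y hx hxy hy
    obtain ⟨g, hg, hfg⟩ := hpiece k hk
    rw [hfg x hx (le_trans hxy hy), hfg y (hx.trans hxy) hy]
    exact hS g hg hxy
  have hinit_le : ∀ k ≤ n, ∀ x y : Icc (0 : ℝ) 1, x ≤ y → y ≤ t k → f x ≤ f y := by
    intro k hk
    induction k with
    | zero =>
      intro x y hxy hy
      exact (congrArg f (le_antisymm hxy (hy.trans (h0.trans_le x.2.1)))).le
    | succ k ih =>
      intro x y hxy hy
      rcases le_total (y : ℝ) (t k) with hyk | hky
      · exact ih (by lia) x y hxy hyk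
      rcases le_total (t k) (x : ℝ) with hkx | hxk
      · exact hpiece_le k hk x y hkx hxy hy
      · let z : Icc (0 : ℝ) 1 := ⟨t k, x.2.1.trans hxk, hky.trans y.2.2⟩
        exact (ih (by lia) x z hxk le_rfl).trans (hpiece_le k hk z y le_rfl hky hy)
  exact fun x y hxy => hinit_le n le_rfl x y hxy (y.2.2.trans h1.ge)

end PiecewiseAlong

/-- `f` follows the itinerary `r` along the family `ℓ`: on the `k`-th piece `[t k, t (k + 1)]` of
the subdivision it coincides with `ℓ (r k)`. -/
def FollowsItinerary {ι : Type*} (ℓ : ι → ℝ → ℝ) {n : ℕ} (t : ℕ → ℝ) (r : Fin n → ι)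
    (f : Icc (0 : ℝ) 1 → ℝ) : Prop :=
  ∀ k : Fin n, ∀ x : Icc (0 : ℝ) 1, (x : ℝ) ∈ Icc (t k) (t (k + 1)) → f x = ℓ (r k) x

namespace FollowsItinerary

variable {ι : Type*} {ℓ : ι → ℝ → ℝ} {n : ℕ} {t : ℕ → ℝ} {r r' : Fin n → ι}
  {f f' : Icc (0 : ℝ) 1 → ℝ}

lemma piecewiseAlong (hr : FollowsItinerary ℓ t r f) (ht : IsSubdivision n t) :
    PiecewiseAlong (range ℓ) f :=
  ⟨n, t, ht.zero, ht.last, ht.lt_succ, fun k hk =>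
    ⟨_, mem_range_self (r ⟨k, hk⟩), fun x hl hu => hr ⟨k, hk⟩ x ⟨hl, hu⟩⟩⟩

lemma unique (hr : FollowsItinerary ℓ t r f) (hr' : FollowsItinerary ℓ t r f')
    (ht : IsSubdivision n t) : f = f' := by
  ext x
  obtain ⟨k, hk, hx⟩ := ht.exists_mem_Icc_succ x.2
  rw [hr ⟨k, hk⟩ x hx, hr' ⟨k, hk⟩ x hx]

lemma itinerary_unique (hr : FollowsItinerary ℓ t r f) (hr' : FollowsItinerary ℓ t r' f)
    (ht : IsSubdivision n t)
    (hinj : ∀ k : Fin n, ∀ x ∈ Ioo (t k) (t (k + 1)), Injective fun i => ℓ i x) : r = r' := by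
  ext k
  obtain ⟨x, hx⟩ := nonempty_Ioo.2 (ht.lt_succ k k.2)
  have hx01 : x ∈ Icc (0 : ℝ) 1 :=
    ⟨(ht.mem_Icc k.2.le).1.trans hx.1.le, hx.2.le.trans (ht.mem_Icc k.2).2⟩
  have hxk := Ioo_subset_Icc_self hx
  exact hinj k x hx ((hr k ⟨x, hx01⟩ hxk).symm.trans (hr' k ⟨x, hx01⟩ hxk))

lemma eq_at_node {r : Fin (n + 1) → ι} (hr : FollowsItinerary ℓ t r f)
    (ht : IsSubdivision (n + 1) t) (k : Fin n) :
    ℓ (r k.castSucc) (t (k + 1)) = ℓ (r k.succ) (t (k + 1)) := by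
  let x : Icc (0 : ℝ) 1 := ⟨t (k + 1), ht.mem_Icc (by lia)⟩
  have hleft : f x = ℓ (r k.castSucc) x := hr _ _ ⟨(ht.lt_succ k (by lia)).le, le_rfl⟩
  have hright : f x = ℓ (r k.succ) x := hr _ _ ⟨le_rfl, (ht.lt_succ (k + 1) (by lia)).le⟩
  exact hleft.symm.trans hright

lemma apply_one {r : Fin (n + 1) → ι} (hr : FollowsItinerary ℓ t r f)
    (ht : IsSubdivision (n + 1) t) : f 1 = ℓ (r (Fin.last n)) (t (n + 1)) := by
  rw [hr (Fin.last n) 1 ⟨(ht.mem_Icc n.le_succ).2, ht.last.ge⟩, ht.last, Icc.coe_one]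

end FollowsItinerary

lemma exists_followsItinerary {ι : Type*} [Finite ι] {ℓ : ι → ℝ → ℝ} {n : ℕ} {t : ℕ → ℝ}
    (ht : IsSubdivision n t) (hℓ : ∀ i, Continuous (ℓ i))
    (hinj : ∀ k : Fin n, ∀ x ∈ Ioo (t k) (t (k + 1)), Injective fun i => ℓ i x)
    (f : C(Icc (0 : ℝ) 1, ℝ)) (hsel : ∀ x, ∃ i, f x = ℓ i x) :
    ∃ r : Fin n → ι, FollowsItinerary ℓ t r f := by
  have hpiece (k : Fin n) : ∃ i, EqOn (IccExtend zero_le_one f) (ℓ i) (Icc (t k) (t (k + 1))) := by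
    refine exists_eqOn_Icc_of_injective_on_Ioo (ht.lt_succ k k.2)
      f.continuous.Icc_extend'.continuousOn (fun i => (hℓ i).continuousOn) (fun x hx => ?_)
      (hinj k)
    have hx01 : x ∈ Icc (0 : ℝ) 1 :=
      ⟨(ht.mem_Icc k.2.le).1.trans hx.1.le, hx.2.le.trans (ht.mem_Icc k.2).2⟩
    rw [IccExtend_of_mem zero_le_one f hx01]
    exact hsel ⟨x, hx01⟩
  choose r hr using hpiece
  exact ⟨r, fun k x hx => (IccExtend_val zero_le_one f x).symm.trans (hr k hx)⟩

namespace FourBraid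

/-- The value at `0` of the `i`-th of the eight lines, relative to the writhe. -/
def intercept : Fin 8 → ℤ := ![2, -4, -2, -2, -2, 0, 0, 0]

/-- The slope of the `i`-th of the eight lines. -/
def slope : Fin 8 → ℤ := ![-2, 4, 2, 0, -2, 2, 0, -2]

/-- The eight lines on which the paths run, for an arbitrary real `w` in place of the writhe. -/
def line (w : ℝ) (i : Fin 8) (x : ℝ) : ℝ := w + intercept i + slope i * x

/-- Six times `node k`. -/
def nodeSixths : ℕ → ℤ
  | 0 => 0
  | 1 => 2
  | 2 => 3
  | 3 => 4
  | _ => 6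

/-- The subdivision `0 < 1/3 < 1/2 < 2/3 < 1` of the unit interval by the abscissas at which two of
the eight lines cross. -/
noncomputable def node (k : ℕ) : ℝ := nodeSixths k / 6

/-- Six times the height of the `i`-th line above the writhe at `node k`. All these numbers are
integers, so that coincidences of lines at the nodes are decidable. -/
def heightSixths (i : Fin 8) (k : ℕ) : ℤ := 6 * intercept i + slope i * nodeSixths k

lemma isSubdivision_node : IsSubdivision 4 node where
  zero := by norm_num [node, nodeSixths]
  last := by norm_num [node, nodeSixths]
  lt_succ k hk := by interval_cases k <;> norm_num [node, nodeSixths]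

lemma line_node (w : ℝ) (i : Fin 8) (k : ℕ) : line w i (node k) = w + heightSixths i k / 6 := by
  simp only [line, node, heightSixths]
  push_cast
  ring

lemma line_node_eq_iff {w : ℝ} {i j : Fin 8} {k : ℕ} :
    line w i (node k) = line w j (node k) ↔ heightSixths i k = heightSixths j k := by
  rw [line_node, line_node, add_right_inj, div_left_inj' (by norm_num), Int.cast_inj]

lemma line_apply (w : ℝ) (i : Fin 8) (x : ℝ) : line w i x =
    ![w + 2 - 2 * x, w - 4 + 4 * x, w - 2 + 2 * x, w - 2, w - 2 - 2 * x, w + 2 * x, w,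
      w - 2 * x] i := by
  fin_cases i <;> simp [line, intercept, slope] <;> ring

lemma continuous_line (w : ℝ) (i : Fin 8) : Continuous (line w i) := by
  unfold line
  fun_prop

lemma line_sub_line (w x : ℝ) (i j : Fin 8) (k : ℕ) :
    6 * (node (k + 1) - node k) * (line w i x - line w j x) =
      (node (k + 1) - x) * (heightSixths i k - heightSixths j k : ℤ) +
        (x - node k) * (heightSixths i (k + 1) - heightSixths j (k + 1) : ℤ) := by
  simp only [line, node, heightSixths]
  push_cast
  ring

lemma heightSixths_sub_mul_nonneg : ∀ (k : Fin 4) (i j : Fin 8),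
    0 ≤ (heightSixths i k - heightSixths j k) *
      (heightSixths i (k + 1) - heightSixths j (k + 1)) := by
  decide

lemma eq_of_heightSixths_eq : ∀ (k : Fin 4) (i j : Fin 8), heightSixths i k = heightSixths j k →
    heightSixths i (k + 1) = heightSixths j (k + 1) → i = j := by
  decide

lemma line_injective_of_mem_Ioo (w : ℝ) (k : Fin 4) {x : ℝ}
    (hx : x ∈ Ioo (node k) (node (k + 1))) : Injective fun i => line w i x := by
  intro i j (hij : line w i x = line w j x)
  have hcomb := line_sub_line w x i j k
  rw [hij, sub_self, mul_zero] at hcomb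
  have hsign := Int.cast_nonneg (R := ℝ) (heightSixths_sub_mul_nonneg k i j)
  rw [Int.cast_mul] at hsign
  obtain ⟨hleft, hright⟩ := eq_zero_and_eq_zero_of_mul_add_mul_eq_zero (sub_pos.2 hx.2)
    (sub_pos.2 hx.1) hsign hcomb.symm
  rw [Int.cast_eq_zero, sub_eq_zero] at hleft hright
  exact eq_of_heightSixths_eq k i j hleft hright

/-- The itineraries of the ten paths, in the order of the paths. -/
def pathItinerary : Fin 10 → Fin 4 → Fin 8 :=
  ![![0, 0, 0, 0], ![1, 1, 1, 1], ![2, 2, 2, 2], ![6, 6, 6, 6], ![4, 1, 1, 1],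
    ![3, 3, 1, 1], ![7, 7, 7, 1], ![7, 7, 2, 2], ![5, 5, 0, 0], ![2, 2, 7, 1]]

lemma pathItinerary_injective : Injective pathItinerary := by
  unfold Injective
  decide

lemma exists_pathItinerary_eq {r : Fin 4 → Fin 8}
    (hnode : ∀ k : Fin 3,
      heightSixths (r k.castSucc) (k + 1) = heightSixths (r k.succ) (k + 1))
    (hend : heightSixths (r 3) 4 = 0) : ∃ p, pathItinerary p = r := by
  -- Choosing the lines from the last piece backwards keeps the enumeration small.
  have henum : ∀ i₃, heightSixths i₃ 4 = 0 → ∀ i₂, heightSixths i₂ 3 = heightSixths i₃ 3 →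
      ∀ i₁, heightSixths i₁ 2 = heightSixths i₂ 2 → ∀ i₀, heightSixths i₀ 1 = heightSixths i₁ 1 →
      ∃ p, pathItinerary p = ![i₀, i₁, i₂, i₃] := by
    decide
  obtain ⟨p, hp⟩ := henum _ hend _ (hnode 2) _ (hnode 1) _ (hnode 0)
  exact ⟨p, hp.trans (FinVec.etaExpand_eq r)⟩

/-- The ten paths for an arbitrary real `w` in place of the writhe, as translates of the paths of
writhe `0`. -/
noncomputable def path (w : ℝ) (p : Fin 10) : C(Icc (0 : ℝ) 1, ℝ) :=
  ContinuousMap.const _ w + ![path₁ 0, path₂ 0, path₃ 0, path₄ 0, path₅ 0,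
    path₆ 0, path₇ 0, path₈ 0, path₉ 0, path₁₀ 0] p

lemma path_apply (w : ℝ) (p : Fin 10) (x : Icc (0 : ℝ) 1) : path w p x =
    ![w + 2 - 2 * (x : ℝ), w - 4 + 4 * x, w - 2 + 2 * x, w,
      max (w - 2 - 2 * x) (w - 4 + 4 * x), max (w - 2) (w - 4 + 4 * x),
      max (w - 2 * x) (w - 4 + 4 * x), max (w - 2 * x) (w - 2 + 2 * x),
      min (w + 2 * x) (w + 2 - 2 * x),
      max (min (w - 2 + 2 * x) (w - 2 * x)) (w - 4 + 4 * x)] p := by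
  fin_cases p <;>
    simp [path, path₁, path₂, path₃, path₄, path₅, path₆, path₇, path₈, path₉, path₁₀] <;>
    grind

lemma path_followsItinerary (w : ℝ) (p : Fin 10) :
    FollowsItinerary (line w) node (pathItinerary p) (path w p) := by
  intro k x ⟨hl, hr⟩
  rw [path_apply, line_apply]
  fin_cases k <;> norm_num [node, nodeSixths] at hl hr <;> fin_cases p <;>
    simp [pathItinerary] <;> grind

lemma path_injective (w : ℝ) : Injective (path w) := fun p q hpq =>
  pathItinerary_injective <| (path_followsItinerary w p).itinerary_unique
    (hpq ▸ path_followsItinerary w q) isSubdivision_node fun k _ => line_injective_of_mem_Ioo w k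

lemma path_apply_one (w : ℝ) (p : Fin 10) : path w p 1 = w := by
  rw [(path_followsItinerary w p).apply_one isSubdivision_node, line_node, add_eq_left]
  have hend : ∀ p, heightSixths (pathItinerary p (Fin.last 3)) (3 + 1) = 0 := by decide
  rw [hend, Int.cast_zero, zero_div]

lemma mem_range_path_of_piecewiseAlong_line {w : ℝ} {f : C(Icc (0 : ℝ) 1, ℝ)}
    (hf : PiecewiseAlong (range (line w)) f) (h1 : f 1 = w) : f ∈ range (path w) := by
  have hsel (x : Icc (0 : ℝ) 1) : ∃ i, f x = line w i x := by
    obtain ⟨_, ⟨i, rfl⟩, hi⟩ := hf.exists_mem_eq x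
    exact ⟨i, hi⟩
  obtain ⟨r, hr⟩ := exists_followsItinerary isSubdivision_node (continuous_line w)
    (fun k _ => line_injective_of_mem_Ioo w k) f hsel
  have hend : heightSixths (r 3) 4 = 0 := by
    have hline := hr.apply_one isSubdivision_node
    rw [h1, line_node] at hline
    simpa using hline
  obtain ⟨p, rfl⟩ := exists_pathItinerary_eq
    (fun k => line_node_eq_iff.1 (hr.eq_at_node isSubdivision_node k)) hend
  exact ⟨p, DFunLike.coe_injective
    ((path_followsItinerary w p).unique hr isSubdivision_node)⟩

lemma mem_Icc_of_piecewiseAlong_line {w : ℝ} {f : Icc (0 : ℝ) 1 → ℝ}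
    (hf : PiecewiseAlong (range (line w)) f) (h1 : f 1 = w) (x : Icc (0 : ℝ) 1) :
    f x ∈ Icc (w + 4 * ((x : ℝ) - 1)) (w - 2 * ((x : ℝ) - 1)) := by
  have hslope : ∀ i, -2 ≤ slope i ∧ slope i ≤ 4 := by decide
  have hlower : Monotone fun x : Icc (0 : ℝ) 1 => 4 * (x : ℝ) - f x := by
    refine (hf.map fun x y => 4 * x - y).monotone ?_
    rintro _ ⟨_, ⟨i, rfl⟩, rfl⟩ x y hxy
    have : (slope i : ℝ) ≤ 4 := by exact_mod_cast (hslope i).2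
    simp only [line]
    nlinarith
  have hupper : Monotone fun x : Icc (0 : ℝ) 1 => f x + 2 * (x : ℝ) := by
    refine (hf.map fun x y => y + 2 * x).monotone ?_
    rintro _ ⟨_, ⟨i, rfl⟩, rfl⟩ x y hxy
    have : (-2 : ℝ) ≤ slope i := by exact_mod_cast (hslope i).1
    simp only [line]
    nlinarith
  have hx1 : x ≤ 1 := x.2.2
  have hlow := hlower hx1
  have hupp := hupper hx1
  simp only [h1, Icc.coe_one] at hlow hupp
  constructor <;> linarith

lemma range_line (w : ℝ) : range (line w) =
    {fun t : ℝ => w + 2 - 2 * t, fun t : ℝ => w - 4 + 4 * t, fun t : ℝ => w - 2 + 2 * t,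
      fun _ : ℝ => w - 2, fun t : ℝ => w - 2 - 2 * t, fun t : ℝ => w + 2 * t,
      fun _ : ℝ => w, fun t : ℝ => w - 2 * t} := by
  have hline : line w = ![fun t : ℝ => w + 2 - 2 * t, fun t : ℝ => w - 4 + 4 * t,
      fun t : ℝ => w - 2 + 2 * t, fun _ : ℝ => w - 2, fun t : ℝ => w - 2 - 2 * t,
      fun t : ℝ => w + 2 * t, fun _ : ℝ => w, fun t : ℝ => w - 2 * t] := by
    ext i t
    rw [line_apply]
    fin_cases i <;> rfl
  simp only [hline, Matrix.range_cons, Matrix.range_empty, singleton_union, union_empty]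

lemma range_path (w : ℤ) : range (path w) = {path₁ w, path₂ w, path₃ w, path₄ w, path₅ w,
    path₆ w, path₇ w, path₈ w, path₉ w, path₁₀ w} := by
  have hpath : path w = ![path₁ w, path₂ w, path₃ w, path₄ w, path₅ w,
      path₆ w, path₇ w, path₈ w, path₉ w, path₁₀ w] := by
    ext p x
    rw [path_apply]
    fin_cases p <;> rfl
  simp only [hpath, Matrix.range_cons, Matrix.range_empty, singleton_union, union_empty]

end FourBraid

open FourBraid in
theorem ten_paths_for_four_braids_general (w : ℝ) :
    {f : C(Icc (0 : ℝ) 1, ℝ) | PiecewiseAlong (range (line w)) f ∧ f 1 = w} = range (path w) ∧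
      (range (path w)).ncard = 10 := by
  refine ⟨Subset.antisymm (fun f hf => mem_range_path_of_piecewiseAlong_line hf.1 hf.2) ?_, ?_⟩
  · rintro _ ⟨p, rfl⟩
    exact ⟨(path_followsItinerary w p).piecewiseAlong isSubdivision_node, path_apply_one w p⟩
  · rw [ncard_range_of_injective (path_injective w), Nat.card_eq_fintype_card, Fintype.card_fin]

/-- There are exactly ten continuous functions on `[0,1]` that are piecewise along the
eight lines `w + 2 - 2t`, `w - 4 + 4t`, `w - 2 + 2t`, `w - 2`, `w - 2 - 2t`, `w + 2t`,
`w`, `w - 2t`, take the value `w` at `t = 1`, and stay in the triangular region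
`w + 4(t-1) ≤ f(t) ≤ w - 2(t-1)`.  This is the enumeration of the ten possible paths
for the annular Rasmussen invariant `d_t` of a 4-braid closure of writhe `w`, before
the subcomplex restriction is applied. -/
theorem ten_paths_for_four_braids (w : ℤ) :
    {f : C(Set.Icc (0 : ℝ) 1, ℝ) |
        PiecewiseAlong ({fun t : ℝ => (w : ℝ) + 2 - 2 * t, fun t : ℝ => (w : ℝ) - 4 + 4 * t,
            fun t : ℝ => (w : ℝ) - 2 + 2 * t, fun _ : ℝ => (w : ℝ) - 2,
            fun t : ℝ => (w : ℝ) - 2 - 2 * t, fun t : ℝ => (w : ℝ) + 2 * t,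
            fun _ : ℝ => (w : ℝ), fun t : ℝ => (w : ℝ) - 2 * t} : Set (ℝ → ℝ)) f ∧
        f ⟨1, Set.right_mem_Icc.mpr zero_le_one⟩ = (w : ℝ) ∧
        ∀ x : Set.Icc (0 : ℝ) 1,
          (w : ℝ) + 4 * ((x : ℝ) - 1) ≤ f x ∧ f x ≤ (w : ℝ) - 2 * ((x : ℝ) - 1)}
      = {path₁ w, path₂ w, path₃ w, path₄ w, path₅ w,
          path₆ w, path₇ w, path₈ w, path₉ w, path₁₀ w} ∧
    ({path₁ w, path₂ w, path₃ w, path₄ w, path₅ w,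
        path₆ w, path₇ w, path₈ w, path₉ w, path₁₀ w} :
      Set C(Set.Icc (0 : ℝ) 1, ℝ)).ncard = 10 := by
  rw [← FourBraid.range_line, ← FourBraid.range_path]
  refine ⟨?_, (ten_paths_for_four_braids_general w).2⟩
  rw [← (ten_paths_for_four_braids_general w).1]
  exact Set.ext fun f => ⟨fun h => ⟨h.1, h.2.1⟩,
    fun h => ⟨h.1, h.2, FourBraid.mem_Icc_of_piecewiseAlong_line h.1 h.2⟩⟩
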